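/- For every sufficiently large n, starting from the path P_n (in which agent v_i buys the edge {v_i, v_{i+1}} for 1 ≤ i ≤ n−1), there exists a sequence of at most n − 1 steps, in each of which one agent adds a single edge to a node at distance at most 2 in the current graph and thereby strictly decreases her cost, such that the final strategy vector is a 2NE of the deg2AOG (no agent can strictly decrease her cost by adding edges to nodes at distance at most 2). -/

import Mathlib

/-!
The dynamics end in a network of diameter at most 3, and every such network is a 2NE of the
add-only game.

Suppose all distances are at most 3 and agent `u` buys edges to a set `T` of non-neighbours at
distance 2. Each `w ∈ T` costs at least its old degree. The distance from `u` to `x` drops by at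
most one, and only if, for some `w ∈ T`, either `x = w` or `x` is a neighbour of `w` other than a
fixed common neighbour of `u` and `w`. For each `w` these are at most `deg w` nodes, so the
deviation does not pay (`isAOEq_of_edist_le_three`).

To reach diameter 3 from the path `0, 1, …, n - 1`, agent `0` buys edges to `2, 3, …, n - 3` in this
order. The target always has degree 2, while at least three nodes (the target and everything beyond
it) come closer. Now only `n - 2` and `n - 1` are not adjacent to `0`. Finally agent `n - 1` buys the
edge to `n - 3`, a node of degree 3; this shortens her distances to `n - 3, 0, 1, 2`. Both kinds of
improvement follow from `cost_lt_of_buy`, with the old distances bounded below by a 1-Lipschitz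
potential (`potential_le_edist`). Altogether these are `n - 3` steps.
-/


/-!
Degree price network creation games (degNCG / degkNCG / degAOG / degkAOG).

A strategy vector assigns to each agent `u` a finite set `st u` of nodes to
which `u` buys an edge.  The induced graph has an edge `{u,v}` iff `v ∈ st u`
or `u ∈ st v`.  The cost of agent `u` is the sum of `deg v - 1` over all `v`
to which `u` bought an edge, plus the sum of (extended, i.e. `⊤` when
unreachable) graph distances from `u` to all nodes.
-/

/-- A strategy vector: each agent picks the set of nodes it buys edges to. -/
abbrev Strategy (V : Type) := V → Finset V

variable {V : Type} [Fintype V] [DecidableEq V]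

/-- The network induced by a strategy vector: `{u,v}` is an edge iff
`v ∈ st u` or `u ∈ st v`. -/
def netG (st : Strategy V) : SimpleGraph V :=
  SimpleGraph.fromRel (fun u v => v ∈ st u)

/-- The degree of a node in the induced network. -/
noncomputable def deg (st : Strategy V) (v : V) : ℕ :=
  letI : DecidableRel (netG st).Adj := Classical.decRel _
  (netG st).degree v

/-- The cost of agent `u`: degree-prices of the bought edges plus the sum of
the distances to all nodes (`⊤` if some node is unreachable). -/
noncomputable def cost (st : Strategy V) (u : V) : ℕ∞ :=
  ((∑ v ∈ st u, (deg st v - 1) : ℕ) : ℕ∞) + ∑ w, (netG st).edist u w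

/-- A strategy vector is valid if nobody buys a self-loop and every edge has
exactly one owner. -/
def Valid (st : Strategy V) : Prop :=
  (∀ u, u ∉ st u) ∧ (∀ u v, v ∈ st u → u ∉ st v)

/-- Pure Nash equilibrium of the degNCG: no agent can strictly decrease her
cost by unilaterally switching to any other strategy. -/
def IsNE (st : Strategy V) : Prop :=
  ∀ (u : V) (t : Finset V), u ∉ t →
    cost st u ≤ cost (Function.update st u t) u

/-- `k`-local Nash equilibrium of the degkNCG: no agent can strictly decrease
her cost by a deviation in which every newly bought edge goes to a node at
distance at most `k` in the current graph. -/
def IskNE (k : ℕ) (st : Strategy V) : Prop :=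
  ∀ (u : V) (t : Finset V), u ∉ t →
    (∀ v ∈ t \ st u, (netG st).edist u v ≤ k) →
    cost st u ≤ cost (Function.update st u t) u

/-- Equilibrium of the add-only game degAOG: no agent can strictly decrease
her cost by adding edges (deviations are supersets of the current strategy). -/
def IsAOEq (st : Strategy V) : Prop :=
  ∀ (u : V) (t : Finset V), u ∉ t → st u ⊆ t →
    cost st u ≤ cost (Function.update st u t) u

/-- Equilibrium of the `k`-local add-only game degkAOG. -/
def IskAOEq (k : ℕ) (st : Strategy V) : Prop :=
  ∀ (u : V) (t : Finset V), u ∉ t → st u ⊆ t →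
    (∀ v ∈ t \ st u, (netG st).edist u v ≤ k) →
    cost st u ≤ cost (Function.update st u t) u

/-- The social cost: the sum of all agents' costs. -/
noncomputable def social (st : Strategy V) : ℕ∞ :=
  ∑ u, cost st u

/-- The center sponsored spanning star on `n + 2` nodes: agent `0` buys an
edge to every other agent, everybody else buys nothing. -/
def starStrat (n : ℕ) : Strategy (Fin (n + 2)) := fun u =>
  if u = 0 then ({0} : Finset (Fin (n + 2)))ᶜ else ∅

/-- The path `P_n = v_0 v_1 ⋯ v_{n-1}` as a strategy vector: agent `v_i` buys
the edge to `v_{i+1}`. -/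
def pathStrat (n : ℕ) : Strategy (Fin n) := fun i =>
  if h : (i : ℕ) + 1 < n then {⟨(i : ℕ) + 1, h⟩} else ∅

/-! ### Edges, degrees and distance bounds -/

lemma netG_adj (st : Strategy V) (a b : V) :
    (netG st).Adj a b ↔ a ≠ b ∧ (b ∈ st a ∨ a ∈ st b) := by
  simp [netG]

lemma deg_eq_ncard (st : Strategy V) (v : V) :
    deg st v = ((netG st).neighborSet v).ncard := by
  classical
  unfold deg
  rw [← SimpleGraph.card_neighborSet_eq_degree, Set.ncard_eq_toFinset_card', Set.toFinset_card]

/-- A function that grows by at most one along each edge bounds distances from below. -/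
lemma potential_le_edist {W : Type} (G : SimpleGraph W) (f : W → ℕ)
    (hf : ∀ a b, G.Adj a b → f b ≤ f a + 1) (a b : W) :
    (f b : ℕ∞) ≤ f a + G.edist a b := by
  by_cases h : G.edist a b = ⊤
  · simp [h]
  · obtain ⟨p, hp⟩ := SimpleGraph.exists_walk_of_edist_ne_top h
    rw [← hp]
    have key : ∀ {a b : W} (p : G.Walk a b), f b ≤ f a + p.length := by
      intro a b p
      induction p with
      | nil => simp
      | cons h p ih =>
        have := hf _ _ h
        simp only [SimpleGraph.Walk.length_cons]
        omega
    exact_mod_cast key p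

lemma edist_le_add_one {W : Type} {G : SimpleGraph W} {a b c : W} {k : ℕ}
    (h : G.edist a b ≤ k) (hbc : G.Adj b c) : G.edist a c ≤ ((k + 1 : ℕ) : ℕ∞) := by
  refine (SimpleGraph.edist_triangle (v := b)).trans ?_
  rw [SimpleGraph.edist_eq_one_iff_adj.2 hbc]
  push_cast
  gcongr

lemma edist_le_one {W : Type} {G : SimpleGraph W} {a b : W}
    (h : G.Adj a b) : G.edist a b ≤ ((1 : ℕ) : ℕ∞) := by
  rw [SimpleGraph.edist_eq_one_iff_adj.2 h]; rfl

lemma netG_update_adj (st : Strategy V) (u : V) (t : Finset V) (hut : u ∉ t) (hsub : st u ⊆ t)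
    (a b : V) :
    (netG (Function.update st u t)).Adj a b ↔
      (netG st).Adj a b ∨ (a = u ∧ b ∈ t) ∨ (b = u ∧ a ∈ t) := by
  simp only [netG_adj, Function.update_apply]
  by_cases ha : a = u
  · subst ha
    by_cases hb : b = a
    · subst hb; simp [hut]
    · have := @hsub b
      have : a ≠ b := fun h => hb h.symm
      simp only [if_true, if_neg hb]
      tauto
  · by_cases hb : b = u
    · subst hb
      have := @hsub a
      simp only [if_true, if_neg ha]
      tauto
    · simp [ha, hb]

lemma netG_le_update (st : Strategy V) (u : V) (t : Finset V) (hut : u ∉ t) (hsub : st u ⊆ t) :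
    netG st ≤ netG (Function.update st u t) := fun a b h =>
  (netG_update_adj st u t hut hsub a b).2 (Or.inl h)

/-! ### The effect of buying one edge -/

/-- Buying one edge to `v` at degree price at most `deg v` pays off if more than `deg v` nodes
come closer. -/
lemma cost_lt_of_buy (st : Strategy V) (u v : V) (hvu : v ≠ u) (hu : u ∉ st u)
    (hv : v ∉ st u)
    (hfin : ∀ x, (netG st).edist u x ≠ ⊤) (X : Finset V) (hX : deg st v < X.card)
    (hgain : ∀ x ∈ X,
      (netG (Function.update st u (insert v (st u)))).edist u x + 1 ≤ (netG st).edist u x) :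
    cost (Function.update st u (insert v (st u))) u < cost st u := by
  have hut : u ∉ insert v (st u) := by simp [hu, hvu.symm]
  have hsub : st u ⊆ insert v (st u) := Finset.subset_insert _ _
  set st' := Function.update st u (insert v (st u)) with hst'
  have hadj := netG_update_adj st u _ hut hsub
  have hle : ∀ x, (netG st').edist u x ≤ (netG st).edist u x := fun x =>
    SimpleGraph.edist_anti (netG_le_update st u _ hut hsub)
  have hdv : deg st' v ≤ deg st v + 1 := by
    rw [deg_eq_ncard, deg_eq_ncard]
    refine (Set.ncard_le_ncard (t := insert u ((netG st).neighborSet v)) ?_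
      (Set.toFinite _)).trans (Set.ncard_insert_le _ _)
    intro y hy
    rw [SimpleGraph.mem_neighborSet, hst', hadj] at hy
    simp only [Set.mem_insert_iff, SimpleGraph.mem_neighborSet]
    tauto
  have hdw : ∀ w ∈ st u, deg st' w ≤ deg st w := by
    intro w hw
    rw [deg_eq_ncard, deg_eq_ncard]
    refine Set.ncard_le_ncard ?_ (Set.toFinite _)
    intro y hy
    rw [SimpleGraph.mem_neighborSet, hst', hadj] at hy
    rw [SimpleGraph.mem_neighborSet]
    rcases hy with h | ⟨h, -⟩ | ⟨h, -⟩
    · exact h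
    · subst h; exact absurd hw hu
    · subst h
      rw [netG_adj]
      exact ⟨fun h => hu (h ▸ hw), Or.inr hw⟩
  have hprice : ∑ w ∈ st' u, (deg st' w - 1) ≤ ∑ w ∈ st u, (deg st w - 1) + deg st v := by
    have : st' u = insert v (st u) := by simp [hst']
    rw [this, Finset.sum_insert hv, add_comm]
    refine add_le_add (Finset.sum_le_sum fun w hw => ?_) (by omega)
    have := hdw w hw
    omega
  have hdist : ∑ x, (netG st').edist u x + X.card ≤ ∑ x, (netG st).edist u x := by
    have hc : (X.card : ℕ∞) = ∑ x, (if x ∈ X then (1 : ℕ∞) else 0) := by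
      simp
    rw [hc, ← Finset.sum_add_distrib]
    refine Finset.sum_le_sum fun x _ => ?_
    split_ifs with h
    · exact hgain x h
    · simpa using hle x
  have hne : ∑ x, (netG st').edist u x ≠ ⊤ := by
    refine (WithTop.sum_ne_top (f := fun x => (netG st').edist u x)).2 fun x _ hx => ?_
    exact hfin x (top_le_iff.1 ((show (netG st').edist u x = ⊤ from hx) ▸ hle x))
  unfold cost
  obtain ⟨s, hs⟩ := ENat.ne_top_iff_exists.1 hne
  rw [← hs] at hdist ⊢
  refine lt_of_lt_of_le ?_ (add_le_add le_rfl hdist)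
  norm_cast
  omega

/-! ### Diameter at most 3 implies stability -/

/-- A network of diameter at most 3 is stable against buying edges to nodes at distance at
most 2. -/
lemma isAOEq_of_edist_le_three (st : Strategy V) (hself : ∀ u, u ∉ st u)
    (hd : ∀ a b, (netG st).edist a b ≤ 3) : IskAOEq 2 st := by
  classical
  intro u t hut hsub hnew
  set st' := Function.update st u t with hst'
  have hadj := netG_update_adj st u t hut hsub
  have hmono := netG_le_update st u t hut hsub
  set G := netG st with hG
  set T := t.filter (fun w => ¬ G.Adj u w) with hT
  have hst_adj : ∀ w ∈ st u, G.Adj u w := by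
    intro w hw
    rw [hG, netG_adj]
    exact ⟨fun h => hself u (h ▸ hw), Or.inl hw⟩
  have hmid : ∀ w ∈ T, ∃ m, G.Adj u m ∧ G.Adj m w := by
    intro w hw
    rw [hT, Finset.mem_filter] at hw
    have h2 : G.edist u w ≤ 2 := by
      refine hnew w ?_
      rw [Finset.mem_sdiff]
      exact ⟨hw.1, fun h => hw.2 (hst_adj w h)⟩
    have hne : G.edist u w ≠ ⊤ := fun h => by simp [h] at h2
    obtain ⟨p, hp⟩ := SimpleGraph.exists_walk_of_edist_ne_top hne
    rw [← hp] at h2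
    have h2' : p.length ≤ 2 := by exact_mod_cast h2
    cases p with
    | nil => exact absurd hw.1 hut
    | cons h q =>
      cases q with
      | nil => exact absurd h hw.2
      | cons h' r =>
        cases r with
        | nil => exact ⟨_, h, h'⟩
        | cons _ _ => simp at h2'
  choose! m hm1 hm2 using hmid
  -- the nodes that may come closer when the edge to `w` is bought
  let B : V → Finset V := fun w => insert w ((Finset.univ.filter (G.Adj w)).erase (m w))
  have hB : ∀ w ∈ T, (B w).card ≤ deg st w := by
    intro w hw
    have hmem : m w ∈ Finset.univ.filter (G.Adj w) := by
      simpa using (hm2 w hw).symm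
    have h1 := Finset.card_insert_le w ((Finset.univ.filter (G.Adj w)).erase (m w))
    rw [Finset.card_erase_add_one hmem] at h1
    refine h1.trans (le_of_eq ?_)
    rw [deg_eq_ncard, ← Set.ncard_coe_finset]
    congr 1
    ext; simp [hG]
  have hdeg : ∀ w, deg st w ≤ deg st' w := by
    intro w
    rw [deg_eq_ncard, deg_eq_ncard]
    exact Set.ncard_le_ncard (fun y hy => hmono hy) (Set.toFinite _)
  have hdegT : ∀ w ∈ T, deg st w + 1 ≤ deg st' w := by
    intro w hw
    rw [hT, Finset.mem_filter] at hw
    rw [deg_eq_ncard, deg_eq_ncard,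
      ← Set.ncard_insert_of_notMem (a := u) (fun h => hw.2 (SimpleGraph.Adj.symm h)) (Set.toFinite _)]
    refine Set.ncard_le_ncard ?_ (Set.toFinite _)
    rintro y (rfl | hy)
    · exact (hadj w y).2 (Or.inr (Or.inr ⟨rfl, hw.1⟩))
    · exact hmono hy
  have hprice : ∑ w ∈ st u, (deg st w - 1) + ∑ w ∈ T, deg st w ≤ ∑ w ∈ t, (deg st' w - 1) := by
    have hdisj : Disjoint (st u) T := by
      rw [Finset.disjoint_left]
      intro w hw hw'
      exact (Finset.mem_filter.1 hw').2 (hst_adj w hw)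
    calc _ ≤ ∑ w ∈ st u, (deg st' w - 1) + ∑ w ∈ T, (deg st' w - 1) := by
          refine add_le_add (Finset.sum_le_sum fun w _ => ?_) (Finset.sum_le_sum fun w hw => ?_)
          · have := hdeg w; omega
          · have := hdegT w hw; omega
      _ = ∑ w ∈ st u ∪ T, (deg st' w - 1) := (Finset.sum_union hdisj).symm
      _ ≤ _ := Finset.sum_le_sum_of_subset
          (Finset.union_subset hsub (Finset.filter_subset _ _))
  have hpt : ∀ x, G.edist u x ≤
      (netG st').edist u x + (((T.filter (fun w => x ∈ B w)).card : ℕ) : ℕ∞) := by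
    intro x
    by_cases h3 : 3 ≤ (netG st').edist u x
    · exact (hd u x).trans (h3.trans le_self_add)
    have hpos : ∀ w ∈ T, x ∈ B w → 1 ≤ (T.filter (fun w => x ∈ B w)).card := fun w hw hx =>
      Finset.card_pos.2 ⟨w, Finset.mem_filter.2 ⟨hw, hx⟩⟩
    obtain ⟨p, hp⟩ := SimpleGraph.exists_walk_of_edist_ne_top
      (fun h => h3 (by simp [h]) : (netG st').edist u x ≠ ⊤)
    rw [← hp] at h3 ⊢
    have h3' : p.length < 3 := by
      rw [not_le] at h3
      exact_mod_cast h3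
    cases p with
    | nil => simp
    | @cons _ y _ h q =>
      have hTy : G.Adj u y ∨ y ∈ T := by
        by_cases hy : G.Adj u y
        · exact Or.inl hy
        · right
          rcases (hadj u y).1 h with h | ⟨-, h⟩ | ⟨rfl, h⟩
          · exact absurd h hy
          · exact Finset.mem_filter.2 ⟨h, hy⟩
          · exact absurd h hut
      cases q with
      | nil =>
        rcases hTy with hy | hy
        · exact (edist_le_one hy).trans (by simp)
        · have h1 := hpos x hy (by simp [B])
          refine (edist_le_add_one (edist_le_one (hm1 x hy)) (hm2 x hy)).trans ?_
          simp only [SimpleGraph.Walk.length_cons, SimpleGraph.Walk.length_nil]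
          norm_cast
          omega
      | @cons _ z _ h' r =>
        cases r with
        | cons _ _ => simp at h3'; omega
        | nil =>
          simp only [SimpleGraph.Walk.length_cons, SimpleGraph.Walk.length_nil]
          have hyu : y ≠ u := h.ne'
          by_cases hxu : x = u
          · subst hxu; simp
          have hyx : G.Adj y x := by
            rcases (hadj y x).1 h' with h | ⟨h, -⟩ | ⟨h, -⟩
            · exact h
            · exact absurd h hyu
            · exact absurd h hxu
          rcases hTy with hy | hy
          · refine (edist_le_add_one (edist_le_one hy) hyx).trans ?_
            norm_cast
            omega
          · by_cases hxm : x = m y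
            · refine (edist_le_one (hxm ▸ hm1 y hy)).trans ?_
              norm_cast
              omega
            · have h1 := hpos y hy (by simp [B, hxm, hyx])
              refine (hd u x).trans ?_
              norm_cast
              omega
  have hcount : ∑ x, (T.filter (fun w => x ∈ B w)).card ≤ ∑ w ∈ T, deg st w := by
    simp only [Finset.card_filter]
    rw [Finset.sum_comm]
    refine Finset.sum_le_sum fun w hw => ?_
    rw [← Finset.card_filter]
    refine le_trans (le_of_eq ?_) (hB w hw)
    congr 1
    ext; simp
  have hdist : ∑ x, G.edist u x ≤
      ∑ x, (netG st').edist u x + ((∑ w ∈ T, deg st w : ℕ) : ℕ∞) := by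
    refine (Finset.sum_le_sum fun x _ => hpt x).trans ?_
    rw [Finset.sum_add_distrib, ← Nat.cast_sum]
    gcongr
  have hst'u : st' u = t := by simp [hst']
  unfold cost
  rw [hst'u]
  calc _ ≤ ((∑ w ∈ st u, (deg st w - 1) : ℕ) : ℕ∞) +
        (∑ x, (netG st').edist u x + ((∑ w ∈ T, deg st w : ℕ) : ℕ∞)) := by gcongr
    _ = ((∑ w ∈ st u, (deg st w - 1) + ∑ w ∈ T, deg st w : ℕ) : ℕ∞) +
        ∑ x, (netG st').edist u x := by push_cast; ring
    _ ≤ _ := by gcongr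

/-! ### The purchases of agent 0 -/

/-- The path after agent `0` has additionally bought the edges to `2, …, k + 1`. -/
def fanStrat (n k : ℕ) : Strategy (Fin n) := fun u =>
  if (u : ℕ) = 0 then Finset.univ.filter (fun w => 1 ≤ (w : ℕ) ∧ (w : ℕ) ≤ k + 1)
  else pathStrat n u

lemma mem_pathStrat (n : ℕ) (u v : Fin n) : v ∈ pathStrat n u ↔ (v : ℕ) = u + 1 := by
  have := v.2
  unfold pathStrat
  split_ifs with h
  · simp [Fin.ext_iff]
  · simp only [Finset.notMem_empty, false_iff]
    omega

lemma mem_fanStrat (n k : ℕ) (u v : Fin n) :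
    v ∈ fanStrat n k u ↔ (v : ℕ) = u + 1 ∨ ((u : ℕ) = 0 ∧ 1 ≤ (v : ℕ) ∧ (v : ℕ) ≤ k + 1) := by
  unfold fanStrat
  split_ifs with h
  · simp; omega
  · rw [mem_pathStrat]; omega

lemma fanStrat_zero (n : ℕ) : fanStrat n 0 = pathStrat n := by
  funext u
  ext v
  rw [mem_fanStrat, mem_pathStrat]
  omega

lemma fanStrat_adj (n k : ℕ) (a b : Fin n) :
    (netG (fanStrat n k)).Adj a b ↔ (b : ℕ) = a + 1 ∨ (a : ℕ) = b + 1 ∨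
      ((a : ℕ) = 0 ∧ 1 ≤ (b : ℕ) ∧ (b : ℕ) ≤ k + 1) ∨
      ((b : ℕ) = 0 ∧ 1 ≤ (a : ℕ) ∧ (a : ℕ) ≤ k + 1) := by
  rw [netG_adj, mem_fanStrat, mem_fanStrat, Ne, Fin.ext_iff]
  omega

lemma fanStrat_succ (n k : ℕ) (hk : k + 2 < n) :
    fanStrat n (k + 1) = Function.update (fanStrat n k) ⟨0, by omega⟩
      (insert ⟨k + 2, hk⟩ (fanStrat n k ⟨0, by omega⟩)) := by
  funext u
  ext v
  rw [Function.update_apply]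
  split_ifs with h
  · subst h
    simp only [Finset.mem_insert, mem_fanStrat, Fin.ext_iff, true_and]
    omega
  · rw [Fin.ext_iff] at h
    simp only [mem_fanStrat]
    simp only at h
    omega

/-- In the fan, a node `x` at or beyond the last node `k + 1` bought is at distance at most `x - k`
from `0`. -/
lemma fanStrat_edist_le (n k : ℕ) (j : ℕ) (hj : k + 1 + j < n) :
    (netG (fanStrat n k)).edist ⟨0, by omega⟩ ⟨k + 1 + j, hj⟩ ≤ ((j + 1 : ℕ) : ℕ∞) := by
  induction j with
  | zero =>
    refine edist_le_one ?_
    rw [fanStrat_adj]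
    simp
  | succ j ih =>
    refine edist_le_add_one (ih (by omega)) ?_
    rw [fanStrat_adj]
    simp
    omega

lemma fanStrat_edist_ne_top (n k : ℕ) (a b : Fin n) :
    (netG (fanStrat n k)).edist a b ≠ ⊤ := by
  have key : ∀ (x : ℕ) (hx : x < n), (netG (fanStrat n k)).Reachable ⟨0, by omega⟩ ⟨x, hx⟩ := by
    intro x
    induction x with
    | zero => intro _; rfl
    | succ x ih =>
      intro hx
      refine (ih (by omega)).trans (SimpleGraph.Adj.reachable ?_)
      rw [fanStrat_adj]
      simp
  exact SimpleGraph.edist_ne_top_iff_reachable.2 ((key a a.2).symm.trans (key b b.2))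

lemma deg_fanStrat_le_two (n k : ℕ) (hk : k + 3 < n) :
    deg (fanStrat n k) ⟨k + 2, by omega⟩ ≤ 2 := by
  rw [deg_eq_ncard]
  refine (Set.ncard_le_ncard (t := {⟨k + 1, by omega⟩, ⟨k + 3, hk⟩}) ?_ (Set.toFinite _)).trans
    ((Set.ncard_insert_le _ _).trans (by rw [Set.ncard_singleton]))
  intro y hy
  rw [SimpleGraph.mem_neighborSet, fanStrat_adj] at hy
  simp only [Set.mem_insert_iff, Set.mem_singleton_iff, Fin.ext_iff]
  simp only at hy
  omega

lemma deg_fanStrat_le_three (n : ℕ) (hn : 10 ≤ n) :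
    deg (fanStrat n (n - 4)) ⟨n - 3, by omega⟩ ≤ 3 := by
  classical
  rw [deg_eq_ncard]
  refine (Set.ncard_le_ncard
    (t := (({⟨0, by omega⟩, ⟨n - 4, by omega⟩, ⟨n - 2, by omega⟩} : Finset (Fin n)) : Set (Fin n)))
    ?_ (Set.toFinite _)).trans ?_
  · intro y hy
    rw [SimpleGraph.mem_neighborSet, fanStrat_adj] at hy
    simp only [Finset.coe_insert, Finset.coe_singleton, Set.mem_insert_iff,
      Set.mem_singleton_iff, Fin.ext_iff]
    simp only at hy
    omega
  · rw [Set.ncard_coe_finset]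
    exact Finset.card_le_three

lemma fanStrat_step (n k : ℕ) (hk : k + 4 < n) :
    cost (fanStrat n (k + 1)) ⟨0, by omega⟩ < cost (fanStrat n k) ⟨0, by omega⟩ := by
  rw [fanStrat_succ n k (by omega)]
  refine cost_lt_of_buy _ _ _ ?_ ?_ ?_ (fun x => fanStrat_edist_ne_top n k _ x)
    {⟨k + 2, by omega⟩, ⟨k + 3, by omega⟩, ⟨k + 4, by omega⟩} ?_ ?_
  · simp
  · simp [mem_fanStrat]
  · simp [mem_fanStrat]
  · refine lt_of_le_of_lt (deg_fanStrat_le_two n k (by omega)) ?_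
    rw [Finset.card_eq_three.2 ⟨_, _, _, ?_, ?_, ?_, rfl⟩] <;> simp
  · intro x hx
    rw [← fanStrat_succ n k (by omega)]
    obtain ⟨j, hj, hxj⟩ : ∃ j, ∃ h : k + 1 + 1 + j < n, x = ⟨k + 1 + 1 + j, h⟩ := by
      simp only [Finset.mem_insert, Finset.mem_singleton] at hx
      rcases hx with rfl | rfl | rfl
      · exact ⟨0, by omega, rfl⟩
      · exact ⟨1, by omega, rfl⟩
      · exact ⟨2, by omega, rfl⟩
    subst hxj
    have h1 := fanStrat_edist_le n (k + 1) j hj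
    have h2 := potential_le_edist (netG (fanStrat n k))
      (fun x => if (x : ℕ) = 0 then 0 else max 1 ((x : ℕ) - k)) ?_
      ⟨0, by omega⟩ ⟨k + 1 + 1 + j, hj⟩
    · refine (add_le_add h1 le_rfl).trans (le_trans ?_ (h2.trans (by simp)))
      norm_cast
      rw [if_neg (by simp)]
      simp only
      omega
    · intro a b hab
      rw [fanStrat_adj] at hab
      split_ifs <;> omega

/-! ### The last purchase and the final network -/

/-- The final network: after all purchases of agent `0`, agent `n - 1` also buys the edge to
`n - 3`. -/
def finalStrat (n : ℕ) (hn : 10 ≤ n) : Strategy (Fin n) :=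
  Function.update (fanStrat n (n - 4)) ⟨n - 1, by omega⟩
    (insert ⟨n - 3, by omega⟩ (fanStrat n (n - 4) ⟨n - 1, by omega⟩))

lemma finalStrat_adj (n : ℕ) (hn : 10 ≤ n) (a b : Fin n) :
    (netG (finalStrat n hn)).Adj a b ↔ (netG (fanStrat n (n - 4))).Adj a b ∨
      ((a : ℕ) = n - 1 ∧ (b : ℕ) = n - 3) ∨ ((b : ℕ) = n - 1 ∧ (a : ℕ) = n - 3) := by
  have ha := a.2
  have hb := b.2
  unfold finalStrat
  rw [netG_update_adj _ _ _ ?_ (Finset.subset_insert _ _)]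
  · simp only [Finset.mem_insert, mem_fanStrat, fanStrat_adj, Fin.ext_iff]
    omega
  · simp only [Finset.mem_insert, mem_fanStrat, Fin.ext_iff]
    omega

lemma finalStrat_step (n : ℕ) (hn : 10 ≤ n) :
    cost (finalStrat n hn) ⟨n - 1, by omega⟩ < cost (fanStrat n (n - 4)) ⟨n - 1, by omega⟩ := by
  have e1 : (netG (finalStrat n hn)).edist ⟨n - 1, by omega⟩ ⟨n - 3, by omega⟩ ≤ ((1 : ℕ) : ℕ∞) :=
    edist_le_one (by rw [finalStrat_adj]; simp)
  have e2 : (netG (finalStrat n hn)).edist ⟨n - 1, by omega⟩ ⟨0, by omega⟩ ≤ ((2 : ℕ) : ℕ∞) :=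
    edist_le_add_one e1 (by rw [finalStrat_adj, fanStrat_adj]; simp only [true_and]; omega)
  have e3 : (netG (finalStrat n hn)).edist ⟨n - 1, by omega⟩ ⟨1, by omega⟩ ≤ ((3 : ℕ) : ℕ∞) :=
    edist_le_add_one e2 (by rw [finalStrat_adj, fanStrat_adj]; simp only [true_and]; omega)
  have e4 : (netG (finalStrat n hn)).edist ⟨n - 1, by omega⟩ ⟨2, by omega⟩ ≤ ((3 : ℕ) : ℕ∞) :=
    edist_le_add_one e2 (by rw [finalStrat_adj, fanStrat_adj]; simp only [true_and]; omega)
  -- `f` is the distance from `n - 1` in the fan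
  let f : Fin n → ℕ := fun x =>
    if (x : ℕ) = 0 then 3 else if n ≤ (x : ℕ) + 4 then n - 1 - x else 4
  have hf : ∀ x, (f x : ℕ∞) ≤ (netG (fanStrat n (n - 4))).edist ⟨n - 1, by omega⟩ x := by
    intro x
    refine (potential_le_edist (netG (fanStrat n (n - 4))) f ?_ ⟨n - 1, by omega⟩ x).trans ?_
    · intro a b hab
      have ha := a.2
      have hb := b.2
      rw [fanStrat_adj] at hab
      simp only [f]
      split_ifs <;> omega
    · have : f ⟨n - 1, by omega⟩ = 0 := by
        simp only [f]
        split_ifs <;> omega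
      rw [this]
      simp
  have combine : ∀ (x : Fin n) (d : ℕ),
      (netG (finalStrat n hn)).edist ⟨n - 1, by omega⟩ x ≤ (d : ℕ∞) → d + 1 ≤ f x →
      (netG (finalStrat n hn)).edist ⟨n - 1, by omega⟩ x + 1 ≤
        (netG (fanStrat n (n - 4))).edist ⟨n - 1, by omega⟩ x := by
    intro x d h1 h2
    refine (add_le_add h1 le_rfl).trans (le_trans ?_ (hf x))
    exact_mod_cast h2
  unfold finalStrat
  refine cost_lt_of_buy _ _ _ ?_ ?_ ?_ (fun x => fanStrat_edist_ne_top n _ _ x)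
    {⟨n - 3, by omega⟩, ⟨0, by omega⟩, ⟨1, by omega⟩, ⟨2, by omega⟩} ?_ ?_
  · rw [Ne, Fin.ext_iff]; simp only; omega
  · rw [mem_fanStrat]; simp only; omega
  · rw [mem_fanStrat]; simp only; omega
  · refine lt_of_le_of_lt (deg_fanStrat_le_three n hn) ?_
    rw [Finset.card_insert_of_notMem, Finset.card_eq_three.2 ⟨_, _, _, ?_, ?_, ?_, rfl⟩] <;>
      simp <;> omega
  · intro x hx
    rw [Finset.mem_insert, Finset.mem_insert, Finset.mem_insert, Finset.mem_singleton] at hx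
    rcases hx with rfl | rfl | rfl | rfl
    · exact combine _ _ e1 (by simp only [f]; split_ifs <;> omega)
    · exact combine _ _ e2 (by simp only [f]; split_ifs <;> omega)
    · exact combine _ _ e3 (by simp only [f]; split_ifs <;> first | contradiction | omega)
    · exact combine _ _ e4 (by simp only [f]; split_ifs <;> first | contradiction | omega)

lemma finalStrat_edist_le_three (n : ℕ) (hn : 10 ≤ n) (a b : Fin n) :
    (netG (finalStrat n hn)).edist a b ≤ 3 := by
  set G := netG (finalStrat n hn) with hG
  have hz : ∀ x : Fin n, (x : ℕ) ≤ n - 3 → G.edist ⟨0, by omega⟩ x ≤ ((1 : ℕ) : ℕ∞) := by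
    intro x hx
    by_cases h0 : (x : ℕ) = 0
    · have : x = ⟨0, by omega⟩ := Fin.ext h0
      simp [this]
    · refine edist_le_one ?_
      rw [hG, finalStrat_adj, fanStrat_adj]
      simp only [true_and]
      omega
  have hc : ∀ x : Fin n, n - 3 < (x : ℕ) → G.Adj ⟨n - 3, by omega⟩ x := by
    intro x hx
    have := x.2
    rw [hG, finalStrat_adj, fanStrat_adj]
    simp only [and_true]
    omega
  have hz2 : ∀ x : Fin n, G.edist ⟨0, by omega⟩ x ≤ ((2 : ℕ) : ℕ∞) := by
    intro x
    by_cases hx : (x : ℕ) ≤ n - 3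
    · exact (hz x hx).trans (by norm_cast)
    · exact edist_le_add_one (hz _ le_rfl) (hc x (by omega))
  by_cases ha : (a : ℕ) ≤ n - 3
  · refine (SimpleGraph.edist_triangle (v := ⟨0, by omega⟩)).trans ?_
    rw [SimpleGraph.edist_comm]
    exact (add_le_add (hz a ha) (hz2 b)).trans (by norm_cast)
  · by_cases hb : (b : ℕ) ≤ n - 3
    · refine (SimpleGraph.edist_triangle (v := ⟨0, by omega⟩)).trans ?_
      rw [SimpleGraph.edist_comm]
      exact (add_le_add (hz2 a) (hz b hb)).trans (by norm_cast)
    · refine (edist_le_add_one (edist_le_one (hc a (by omega)).symm) (hc b (by omega))).trans ?_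
      norm_cast

/-- For every sufficiently large `n`, starting from the path
`P_n` there is a sequence of at most `n - 1` steps, in each of which one agent
adds a single edge towards a node at distance at most 2 in the current graph
and thereby strictly decreases her cost, ending in a 2NE of the deg2AOG. -/
theorem path_to_2AOEq :
    ∃ N : ℕ, ∀ n : ℕ, N ≤ n →
      ∃ (L : ℕ) (seq : Fin (L + 1) → Strategy (Fin n)),
        L ≤ n - 1 ∧
        seq 0 = pathStrat n ∧
        (∀ i : Fin L, ∃ (u v : Fin n),
          v ≠ u ∧ v ∉ seq i.castSucc u ∧ u ∉ seq i.castSucc v ∧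
          (netG (seq i.castSucc)).edist u v ≤ 2 ∧
          seq i.succ =
            Function.update (seq i.castSucc) u (insert v (seq i.castSucc u)) ∧
          cost (seq i.succ) u < cost (seq i.castSucc) u) ∧
        IskAOEq 2 (seq (Fin.last L)) := by
  refine ⟨10, fun n hn => ⟨n - 3,
    fun i => if (i : ℕ) ≤ n - 4 then fanStrat n i else finalStrat n hn, by omega, ?_, ?_, ?_⟩⟩
  · simp [fanStrat_zero]
  · intro i
    have hi := i.2
    simp only [Fin.val_castSucc, Fin.val_succ]
    rw [if_pos (by omega)]
    by_cases h : (i : ℕ) + 1 ≤ n - 4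
    · rw [if_pos h]
      refine ⟨⟨0, by omega⟩, ⟨i + 2, by omega⟩, ?_, ?_, ?_, ?_,
        fanStrat_succ n i (by omega), fanStrat_step n i (by omega)⟩
      · simp
      · simp [mem_fanStrat]
      · simp [mem_fanStrat]
      · have := fanStrat_edist_le n i 1 (by omega)
        exact_mod_cast this
    · rw [if_neg h]
      have hi' : (i : ℕ) = n - 4 := by omega
      rw [hi']
      refine ⟨⟨n - 1, by omega⟩, ⟨n - 3, by omega⟩, ?_, ?_, ?_, ?_, rfl, finalStrat_step n hn⟩
      · rw [Ne, Fin.ext_iff]; simp only; omega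
      · rw [mem_fanStrat]; simp only; omega
      · rw [mem_fanStrat]; simp only; omega
      · have h1 : (netG (fanStrat n (n - 4))).edist ⟨n - 1, by omega⟩ ⟨n - 2, by omega⟩
            ≤ ((1 : ℕ) : ℕ∞) := edist_le_one (by rw [fanStrat_adj]; simp only; omega)
        have h2 := edist_le_add_one (c := ⟨n - 3, by omega⟩) h1
          (by rw [fanStrat_adj]; simp only; omega)
        exact_mod_cast h2
  · simp only [Fin.val_last]
    rw [if_neg (by omega)]
    refine isAOEq_of_edist_le_three _ ?_ (finalStrat_edist_le_three n hn)
    intro u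
    unfold finalStrat
    rw [Function.update_apply]
    split_ifs with h
    · subst h
      simp only [Finset.mem_insert, mem_fanStrat, Fin.ext_iff]
      omega
    · rw [mem_fanStrat]
      omega
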